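/- Let 0 < d < 4/5. Then ∫₀¹∫₀¹ (1-u)^{2-2d} v^{1-d} (1-v)^{2-3d} (1-uv)^{5d-5} ₂F₁(d,2d-1;2d;u) ₂F₁(1,d;2-d;v) du dv = [Γ(1-d)² Γ(2d) Γ(3-3d) Γ(4-5d) / (2 Γ(d) Γ(5-5d) Γ(4-4d))] · ₃F₂(d, 2-2d, 3-3d; 3-2d, 4-4d; 1) + [Γ(1-d)(1-2d)/(2-2d)] · [Γ(3-3d)Γ(4-5d)/(Γ(5-5d)Γ(4-4d))] · ₄F₃(1, d, 2-2d, 3-3d; 2-d, 3-2d, 4-4d; 1). -/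

import Mathlib

open Real MeasureTheory

/-- Pochhammer symbol `(a)_k = a (a+1) ⋯ (a+k-1)` for real `a`. -/
noncomputable def poch (a : ℝ) (k : ℕ) : ℝ := (ascPochhammer ℝ k).eval a

/-- Gaussian hypergeometric function `₂F₁(a,b;c;z)`. -/
noncomputable def hyp2F1 (a b c z : ℝ) : ℝ :=
  ∑' k : ℕ, (poch a k * poch b k) / poch c k * z ^ k / (Nat.factorial k)

/-- Generalized hypergeometric function `₃F₂(a₁,a₂,a₃;b₁,b₂;z)`. -/
noncomputable def hyp3F2 (a₁ a₂ a₃ b₁ b₂ z : ℝ) : ℝ :=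
  ∑' k : ℕ, (poch a₁ k * poch a₂ k * poch a₃ k) / (poch b₁ k * poch b₂ k) * z ^ k /
    (Nat.factorial k)

/-- Generalized hypergeometric function `₄F₃(a₁,a₂,a₃,a₄;b₁,b₂,b₃;z)`. -/
noncomputable def hyp4F3 (a₁ a₂ a₃ a₄ b₁ b₂ b₃ z : ℝ) : ℝ :=
  ∑' k : ℕ, (poch a₁ k * poch a₂ k * poch a₃ k * poch a₄ k) /
    (poch b₁ k * poch b₂ k * poch b₃ k) * z ^ k / (Nat.factorial k)



lemma poch_zero' (a : ℝ) : poch a 0 = 1 := by simp [poch]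

lemma poch_succ' (a : ℝ) (k : ℕ) : poch a (k+1) = poch a k * (a + k) := by
  simp [poch, ascPochhammer_succ_eval]

lemma poch_pos' {a : ℝ} (ha : 0 < a) (k : ℕ) : 0 < poch a k := ascPochhammer_pos k a ha

lemma poch_one' (k : ℕ) : poch 1 k = (k.factorial : ℝ) := by
  simp [poch]

lemma poch_le' {a b : ℝ} (ha : 0 < a) (hab : a ≤ b) (k : ℕ) : poch a k ≤ poch b k := by
  induction k with
  | zero => simp [poch_zero']
  | succ k ih =>
    rw [poch_succ', poch_succ']
    have := (poch_pos' ha k).le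
    have := (poch_pos' (ha.trans_le hab) k).le
    gcongr

lemma poch_Gamma {a : ℝ} (ha : 0 < a) (k : ℕ) : Real.Gamma (a + k) = poch a k * Real.Gamma a := by
  induction k with
  | zero => simp [poch_zero']
  | succ k ih =>
    rw [poch_succ']
    push_cast
    rw [← add_assoc, Real.Gamma_add_one (by positivity), ih]; ring

lemma poch_shift (a : ℝ) (k : ℕ) : poch a k * (a + k) = a * poch (a+1) k := by
  induction k with
  | zero => simp [poch_zero']
  | succ k ih =>
    rw [poch_succ', poch_succ', ih]; push_cast; ring

lemma binom_hasSum (a : ℝ) {x : ℝ} (hx : |x| < 1) :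
    HasSum (fun k : ℕ => poch a k / (k.factorial : ℝ) * x ^ k) ((1 - x) ^ (-a)) := by
  have h := (Real.one_div_one_sub_rpow_hasFPowerSeriesOnBall_zero a).hasSum (y := x)
    (by simpa [Real.enorm_eq_ofReal_abs] using hx)
  have hx1 : 0 ≤ 1 - x := by have := (abs_lt.1 hx).2; linarith
  simp only [zero_add, one_div] at h
  rw [Real.rpow_neg hx1]
  refine Eq.mp (congrArg (fun f => HasSum f _) (funext fun k => ?_)) h
  symm
  rw [FormalMultilinearSeries.ofScalars_apply_eq, ← Ring.multichoose_eq]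
  have := Ring.factorial_nsmul_multichoose_eq_ascPochhammer a k
  rw [Polynomial.ascPochhammer_smeval_eq_eval] at this
  rw [poch, ← this, nsmul_eq_mul, mul_div_cancel_left₀, smul_eq_mul]
  exact_mod_cast k.factorial_ne_zero

lemma beta_int {a b : ℝ} (ha : 0 < a) (hb : 0 < b) :
    IntegrableOn (fun x : ℝ => x ^ (a-1) * (1-x) ^ (b-1)) (Set.Ioo 0 1) ∧
    ∫ x in Set.Ioo (0:ℝ) 1, x ^ (a-1) * (1-x) ^ (b-1)
      = Real.Gamma a * Real.Gamma b / Real.Gamma (a+b) := by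
  have h1 := Complex.betaIntegral_convergent (u := a) (v := b) (by simpa) (by simpa)
  rw [intervalIntegrable_iff_integrableOn_Ioo_of_le zero_le_one] at h1
  have e : ∀ x ∈ Set.Ioo (0:ℝ) 1, (x:ℂ) ^ ((a:ℂ)-1) * (1-(x:ℂ)) ^ ((b:ℂ)-1)
      = ((x ^ (a-1) * (1-x) ^ (b-1) : ℝ) : ℂ) := by
    intro x hx
    push_cast
    rw [Complex.ofReal_cpow hx.1.le, Complex.ofReal_cpow (by linarith [hx.2])]
    push_cast; rfl
  have h2 := h1.congr_fun e measurableSet_Ioo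
  have h3 : IntegrableOn (fun x : ℝ => x ^ (a-1) * (1-x) ^ (b-1)) (Set.Ioo 0 1) := by
    have := h2.re
    simpa using! this
  refine ⟨h3, ?_⟩
  have := ProbabilityTheory.beta_eq_betaIntegralReal a b ha hb
  rw [ProbabilityTheory.beta] at this
  rw [this, Complex.betaIntegral, intervalIntegral.integral_of_le zero_le_one,
    integral_Ioc_eq_integral_Ioo, setIntegral_congr_fun measurableSet_Ioo e, integral_complex_ofReal]
  simp


lemma hasSum_of_eq {f g : ℕ → ℝ} {a b : ℝ} (h : HasSum f a) (e : ∀ k, g k = f k) (e2 : b = a) :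
    HasSum g b := by
  rw [funext e, e2]; exact h

noncomputable def pk (d : ℝ) (k : ℕ) : ℝ := poch d k / (k.factorial : ℝ)

lemma pk_pos {d : ℝ} (hd : 0 < d) (k : ℕ) : 0 < pk d k :=
  div_pos (poch_pos' hd k) (by exact_mod_cast k.factorial_pos)

lemma pk_zero (d : ℝ) : pk d 0 = 1 := by simp [pk, poch_zero']

lemma pk_succ (d : ℝ) (k : ℕ) : pk d (k+1) * (k+1) = pk d k * (k + d) := by
  have : (k.factorial : ℝ) ≠ 0 := by exact_mod_cast k.factorial_ne_zero
  have h2 : (k : ℝ) + 1 ≠ 0 := by positivity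
  rw [pk, pk, poch_succ', Nat.factorial_succ]
  push_cast
  field_simp
  ring

lemma pk_le_one {d : ℝ} (hd : 0 < d) (hd1 : d < 1) (k : ℕ) : pk d k ≤ 1 := by
  rw [pk, div_le_one (by exact_mod_cast k.factorial_pos), ← poch_one']
  exact poch_le' hd hd1.le k

lemma euler_int {d b c z : ℝ} (hd : 0 < d) (hb : 0 < b) (hc : 0 < c)
    (hz : 0 ≤ z) (hz1 : z ≤ 1)
    (hint : IntegrableOn (fun t : ℝ => t ^ (b-1) * (1-t) ^ (c-1) * (1 - z*t) ^ (-d)) (Set.Ioo 0 1)) :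
    HasSum (fun k : ℕ => pk d k * z ^ k * (Real.Gamma (b+k) * Real.Gamma c / Real.Gamma (b+k+c)))
      (∫ t in Set.Ioo (0:ℝ) 1, t ^ (b-1) * (1-t) ^ (c-1) * (1 - z*t) ^ (-d)) := by
  have key : ∀ t ∈ Set.Ioo (0:ℝ) 1,
      HasSum (fun k : ℕ => pk d k * z ^ k * (t ^ (b+k-1) * (1-t) ^ (c-1)))
        (t ^ (b-1) * (1-t) ^ (c-1) * (1 - z*t) ^ (-d)) := by
    intro t ht
    have h0 : 0 ≤ z * t := mul_nonneg hz ht.1.le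
    have h := (binom_hasSum d (x := z*t) (by
      rw [abs_of_nonneg h0]; nlinarith [ht.1, ht.2])).mul_left (t ^ (b-1) * (1-t) ^ (c-1))
    refine Eq.mp (congrArg (fun f => HasSum f _) (funext fun k => ?_)) h
    rw [show b + k - 1 = (b-1) + (k:ℕ) by ring, Real.rpow_add ht.1, Real.rpow_natCast, mul_pow, pk]
    ring
  have h2 : ∀ k : ℕ, ∫ t in Set.Ioo (0:ℝ) 1, pk d k * z ^ k * (t ^ (b+k-1) * (1-t) ^ (c-1))
      = pk d k * z ^ k * (Real.Gamma (b+k) * Real.Gamma c / Real.Gamma (b+k+c)) := by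
    intro k
    rw [integral_const_mul, (beta_int (by positivity) hc).2]
  simp_rw [← h2]
  refine hasSum_integral_of_dominated_convergence
    (fun k t => pk d k * z ^ k * (t ^ (b+k-1) * (1-t) ^ (c-1))) ?_ ?_ ?_ ?_ ?_
  · intro k
    exact ((beta_int (by positivity) hc).1.const_mul _).aestronglyMeasurable
  · intro k
    filter_upwards [ae_restrict_mem measurableSet_Ioo] with t ht
    rw [Real.norm_of_nonneg]
    have := pk_pos hd k
    have := ht.1
    have : 0 < 1 - t := by linarith [ht.2]
    positivity
  · filter_upwards [ae_restrict_mem measurableSet_Ioo] with t ht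
    exact (key t ht).summable
  · refine hint.congr ?_
    filter_upwards [ae_restrict_mem measurableSet_Ioo] with t ht
    exact (key t ht).tsum_eq.symm
  · filter_upwards [ae_restrict_mem measurableSet_Ioo] with t ht
    exact key t ht

lemma euler_integrable {b c z : ℝ} (e : ℝ) (hb : 0 < b) (hc : 0 < c)
    (hz : 0 ≤ z) (hz1 : z < 1) :
    IntegrableOn (fun t : ℝ => t ^ (b-1) * (1-t) ^ (c-1) * (1 - z*t) ^ e) (Set.Ioo 0 1) := by
  have hcont : ContinuousOn (fun t : ℝ => (1 - z*t) ^ e) (Set.Icc 0 1) := by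
    apply ContinuousOn.rpow_const (by fun_prop)
    intro t ht
    left
    nlinarith [ht.1, ht.2]
  obtain ⟨C, hC⟩ := isCompact_Icc.exists_bound_of_continuousOn hcont
  refine (beta_int hb hc).1.mul_bdd (c := C)
    ((hcont.mono Set.Ioo_subset_Icc_self).aestronglyMeasurable measurableSet_Ioo) ?_
  filter_upwards [ae_restrict_mem measurableSet_Ioo] with t ht
  exact hC t (Set.Ioo_subset_Icc_self ht)

lemma S_hasSum {d x : ℝ} (hd : 0 < d) (hd1 : d < 1) (hx : 0 < x) :
    HasSum (fun k : ℕ => pk d k / (x + k))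
      (Real.Gamma x * Real.Gamma (1-d) / Real.Gamma (x+(1-d))) := by
  have e : ∀ t ∈ Set.Ioo (0:ℝ) 1, t ^ (x-1) * (1-t) ^ ((1-d)-1)
      = t ^ (x-1) * (1-t) ^ ((1:ℝ)-1) * (1 - 1*t) ^ (-d) := by
    intro t ht
    simp
  have hb := beta_int hx (b := 1-d) (by linarith)
  have h := euler_int hd hx one_pos zero_le_one le_rfl (hb.1.congr_fun e measurableSet_Ioo)
  rw [← setIntegral_congr_fun measurableSet_Ioo e, hb.2] at h
  refine Eq.mp (congrArg (fun f => HasSum f _) (funext fun k => ?_)) h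
  have hk : 0 < x + k := by positivity
  have := Real.Gamma_pos_of_pos hk
  rw [Real.Gamma_add_one hk.ne', Real.Gamma_one]
  field_simp
  simp

lemma pk_tendsto {d : ℝ} (hd : 0 < d) (hd1 : d < 1) :
    Filter.Tendsto (pk d) Filter.atTop (nhds 0) := by
  have h := ((S_hasSum hd hd1 one_pos).mul_left (1-d)).tendsto_sum_nat
  have h1 : (1-d) * (Real.Gamma 1 * Real.Gamma (1-d) / Real.Gamma (1+(1-d))) = 1 := by
    have : 0 < 1 - d := by linarith
    have h3 := Real.Gamma_pos_of_pos this
    rw [add_comm 1 (1-d), Real.Gamma_add_one this.ne', Real.Gamma_one]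
    field_simp
  rw [h1] at h
  have h2 : ∀ n : ℕ, ∑ k ∈ Finset.range n, (1-d) * (pk d k / (1 + k)) = 1 - pk d n := by
    intro n
    induction n with
    | zero => simp [pk_zero]
    | succ n ih =>
      rw [Finset.sum_range_succ, ih]
      have := pk_succ d n
      have h2 : (1 + n : ℝ) ≠ 0 := by positivity
      field_simp
      linarith
  simp_rw [h2] at h
  have := h.const_sub 1
  simpa using this

noncomputable def gk (d : ℝ) (k : ℕ) : ℝ := poch (2*d-1) k / poch (2*d) k

lemma gk_mul {d : ℝ} (hd : 0 < d) (k : ℕ) : gk d k * (2*d-1+k) = 2*d-1 := by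
  have h := poch_shift (2*d-1) k
  have := poch_pos' (a := 2*d) (by linarith) k
  rw [sub_add_cancel] at h
  rw [gk, div_mul_eq_mul_div, h]
  field_simp

lemma gk_bound {d : ℝ} (hd : 0 < d) (hd1 : d < 1) (k : ℕ) : |gk d k| ≤ (1/d) * (1 / (1 + k)) := by
  rcases k with _ | k
  · simp only [gk, poch_zero']; norm_num
    rw [le_inv_comm₀ one_pos hd]; simpa using hd1.le
  · have h := gk_mul hd (k+1)
    push_cast at h ⊢
    have hp : 0 < 2*d-1+(k+1:ℝ) := by have : (0:ℝ) ≤ k := by positivity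
                                      linarith
    have hg : gk d (k+1) = (2*d-1)/(2*d-1+(k+1:ℝ)) := by field_simp; linarith
    rw [hg, abs_div, abs_of_pos hp]
    rw [show 1/d * (1/(1+(k+1:ℝ))) = 1 / (d * (1+(k+1))) by rw [one_div_mul_one_div]]
    have hk : (0:ℝ) ≤ k := by positivity
    apply div_le_div₀ zero_le_one
    · rw [abs_le]; constructor <;> linarith
    · positivity
    · nlinarith

lemma pg_summable {d : ℝ} (hd : 0 < d) (hd1 : d < 1) : Summable (fun k => |pk d k * gk d k|) := by
  refine Summable.of_nonneg_of_le (fun _ => abs_nonneg _) (fun k => ?_)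
    ((S_hasSum hd hd1 one_pos).summable.mul_left (1/d))
  rw [abs_mul, abs_of_pos (pk_pos hd k)]
  have := mul_le_mul_of_nonneg_left (gk_bound hd hd1 k) (pk_pos hd k).le
  calc _ ≤ _ := this
    _ = _ := by ring

lemma gauss_hasSum {d : ℝ} (hd : 0 < d) (hd1 : d < 1) :
    HasSum (fun k => pk d k * gk d k) (Real.Gamma (2*d) * Real.Gamma (1-d) / Real.Gamma d) := by
  have hs := (pg_summable hd hd1).of_abs
  have h1 := ((S_hasSum hd hd1 (x := 2*d) (by linarith)).mul_left d).tendsto_sum_nat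
  have hv : d * (Real.Gamma (2*d) * Real.Gamma (1-d) / Real.Gamma (2*d+(1-d)))
      = Real.Gamma (2*d) * Real.Gamma (1-d) / Real.Gamma d := by
    have := Real.Gamma_pos_of_pos hd
    rw [show 2*d+(1-d) = d + 1 by ring, Real.Gamma_add_one hd.ne']
    field_simp
  rw [hv] at h1
  have h2 : ∀ n : ℕ, ∑ k ∈ Finset.range (n+1), pk d k * gk d k
      = ∑ k ∈ Finset.range (n+1), d * (pk d k / (2*d + k)) + pk d n * ((n + d)/(n + 2*d)) := by
    intro n
    induction n with
    | zero => simp [pk_zero, gk, poch_zero']; field_simp; norm_num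
    | succ n ih =>
      rw [Finset.sum_range_succ, ih, Finset.sum_range_succ _ (n+1)]
      have h := gk_mul hd (n+1)
      have hp := pk_succ d n
      push_cast at h ⊢
      have hn : (0:ℝ) ≤ n := by positivity
      have hp1 : 0 < 2*d-1+(n+1:ℝ) := by linarith
      have hg : gk d (n+1) = (2*d-1)/(2*d-1+(n+1:ℝ)) := by field_simp; linarith
      have hpn : pk d n * (n + d) = pk d (n+1) * (n+1) := hp.symm
      rw [hg, ← mul_div_assoc, hpn]
      have : 0 < n + 2*d := by linarith
      have : 0 < 2*d + (n+1) := by linarith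
      have : 0 < (n:ℝ)+1+2*d := by linarith
      rw [show 2*d-1+(n+1:ℝ) = n + 2*d by ring, show 2*d+(n+1:ℝ) = (n:ℝ)+1+2*d by ring]
      field_simp
      ring
  have h3 : Filter.Tendsto (fun n : ℕ => pk d n * ((n + d)/(n + 2*d))) Filter.atTop (nhds 0) := by
    refine squeeze_zero (fun n => ?_) (fun n => ?_) (pk_tendsto hd hd1)
    · have := pk_pos hd n; positivity
    · have := pk_pos hd n
      have h4 : ((n + d)/(n + 2*d) : ℝ) ≤ 1 := by
        rw [div_le_one (by positivity)]; linarith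
      nlinarith
  have h4 := (h1.comp (Filter.tendsto_add_atTop_nat 1)).add h3
  have h5 := hs.hasSum.tendsto_sum_nat.comp (Filter.tendsto_add_atTop_nat 1)
  have h6 := tendsto_nhds_unique h5 (h4.congr fun n => (h2 n).symm)
  rw [add_zero] at h6
  rw [← h6]
  exact hs.hasSum

lemma mom_hasSum {d : ℝ} (hd : 0 < d) (hd1 : d < 1) (k : ℕ) :
    HasSum (fun j : ℕ => pk d j * gk d j / (k + j + 1))
      ((Real.Gamma (2*d) * Real.Gamma (1-d) / Real.Gamma d
        + (1-2*d) * ((k.factorial : ℝ) / ((1-d) * poch (2-d) k))) / (2-2*d+k)) := by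
  have h1 := (S_hasSum hd hd1 (x := k+1) (by positivity)).mul_left (2*d-1)
  have h2 := ((gauss_hasSum hd hd1).sub h1).div_const (2-2*d+k)
  have hG : Real.Gamma (k+1) * Real.Gamma (1-d) / Real.Gamma (k+1+(1-d))
      = (k.factorial : ℝ) / ((1-d) * poch (2-d) k) := by
    have h0 : 0 < 1-d := by linarith
    have := Real.Gamma_pos_of_pos h0
    have := poch_pos' (a := 2-d) (by linarith) k
    rw [Real.Gamma_nat_eq_factorial, show (k:ℝ)+1+(1-d) = (2-d)+k by ring,
      poch_Gamma (by linarith), show 2-d = (1-d)+1 by ring, Real.Gamma_add_one h0.ne']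
    field_simp
  rw [hG] at h2
  refine hasSum_of_eq h2 (fun j => ?_) (by ring)
  have hg := gk_mul hd j
  have hk : (0:ℝ) ≤ k := by positivity
  have h3 : 0 < 2-2*d+k := by linarith
  have h4 : 0 < (k:ℝ)+j+1 := by positivity
  rw [show (k:ℝ)+1+j = k+j+1 by ring, div_eq_div_iff h4.ne' h3.ne', sub_mul, mul_assoc (2*d-1),
    div_mul_cancel₀ _ h4.ne']
  linear_combination (-pk d j) * hg


lemma cv_maps {z x : ℝ} (hz : 0 ≤ z) (hz1 : z < 1) (hx : x ∈ Set.Ioo (0:ℝ) 1) :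
    0 < 1 - z*x ∧ (1-x)/(1-z*x) ∈ Set.Ioo (0:ℝ) 1 := by
  have h1 : 0 < 1 - z*x := by nlinarith [hx.1, hx.2]
  refine ⟨h1, div_pos (by linarith [hx.2]) h1, ?_⟩
  rw [div_lt_one h1]
  nlinarith [hx.1, hx.2]

lemma cv_inv {z x : ℝ} (hz : 0 ≤ z) (hz1 : z < 1) (hx : x ∈ Set.Ioo (0:ℝ) 1) :
    1 - (1-x)/(1-z*x) = x*(1-z)/(1-z*x) ∧ 1 - z*((1-x)/(1-z*x)) = (1-z)/(1-z*x) := by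
  have h1 := (cv_maps hz hz1 hx).1
  constructor
  · rw [eq_div_iff h1.ne', sub_mul, div_mul_cancel₀ _ h1.ne']; ring
  · rw [eq_div_iff h1.ne', sub_mul, mul_assoc, div_mul_cancel₀ _ h1.ne']; ring

lemma cv_invol {z x : ℝ} (hz : 0 ≤ z) (hz1 : z < 1) (hx : x ∈ Set.Ioo (0:ℝ) 1) :
    (1 - (1-x)/(1-z*x)) / (1 - z*((1-x)/(1-z*x))) = x := by
  have h1 := (cv_maps hz hz1 hx).1
  have : 1 - z ≠ 0 := by linarith
  rw [(cv_inv hz hz1 hx).1, (cv_inv hz hz1 hx).2, div_div_div_cancel_right₀ h1.ne', mul_div_cancel_right₀ _ this]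

lemma cv {z : ℝ} (hz : 0 ≤ z) (hz1 : z < 1) (f : ℝ → ℝ) :
    ∫ x in Set.Ioo (0:ℝ) 1, f x
      = ∫ x in Set.Ioo (0:ℝ) 1, (1-z)/(1-z*x)^2 * f ((1-x)/(1-z*x)) := by
  have himg : (fun x : ℝ => (1-x)/(1-z*x)) '' Set.Ioo (0:ℝ) 1 = Set.Ioo (0:ℝ) 1 := by
    ext y
    constructor
    · rintro ⟨x, hx, rfl⟩
      exact (cv_maps hz hz1 hx).2
    · intro hy
      exact ⟨_, (cv_maps hz hz1 hy).2, cv_invol hz hz1 hy⟩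
  have hinj : Set.InjOn (fun x : ℝ => (1-x)/(1-z*x)) (Set.Ioo (0:ℝ) 1) := by
    intro x hx y hy hxy
    have h1 := cv_invol hz hz1 hx
    have h2 := cv_invol hz hz1 hy
    simp only at hxy
    rw [hxy] at h1
    rw [← h1, h2]
  have hder : ∀ x ∈ Set.Ioo (0:ℝ) 1, HasDerivWithinAt (fun x : ℝ => (1-x)/(1-z*x))
      (-((1-z)/(1-z*x)^2)) (Set.Ioo (0:ℝ) 1) x := by
    intro x hx
    have h1 := (cv_maps hz hz1 hx).1
    have h := ((hasDerivAt_id x).const_sub 1).div (((hasDerivAt_id x).const_mul z).const_sub 1) h1.ne'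
    refine (h.congr_deriv ?_).hasDerivWithinAt
    simp only [id]
    field_simp
    ring
  have h := integral_image_eq_integral_abs_deriv_smul measurableSet_Ioo hder hinj f
  rw [himg] at h
  rw [h]
  refine setIntegral_congr_fun measurableSet_Ioo fun x hx => ?_
  have : 0 ≤ (1-z)/(1-z*x)^2 := div_nonneg (by linarith) (sq_nonneg _)
  simp only [abs_neg, smul_eq_mul]
  rw [abs_of_nonneg this]

lemma swap_int {b w W : ℝ → ℝ} (mb : Measurable b) (mw : Measurable w)
    (pb : ∀ s ∈ Set.Ioo (0:ℝ) 1, 0 ≤ b s) (pw : ∀ s ∈ Set.Ioo (0:ℝ) 1, 0 ≤ w s)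
    (hw : ∀ s ∈ Set.Ioo (0:ℝ) 1, IntegrableOn w (Set.Ioo s 1) ∧ ∫ v in Set.Ioo s 1, w v = W s)
    (hint : IntegrableOn (fun s => b s * W s) (Set.Ioo 0 1)) :
    IntegrableOn (fun v => w v * ∫ s in Set.Ioo 0 v, b s) (Set.Ioo 0 1) ∧
    ∫ v in Set.Ioo (0:ℝ) 1, w v * ∫ s in Set.Ioo 0 v, b s
      = ∫ s in Set.Ioo (0:ℝ) 1, b s * W s := by
  set μ := (volume : Measure ℝ).restrict (Set.Ioo 0 1) with hμ
  let G : ℝ × ℝ → ℝ := fun p => if p.1 < p.2 then b p.1 * w p.2 else 0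
  have mG : Measurable G := by
    refine Measurable.ite (measurableSet_lt measurable_fst measurable_snd) ?_ measurable_const
    exact (mb.comp measurable_fst).mul (mw.comp measurable_snd)
  have e1 : ∀ s v, G (s, v) = b s * (Set.Ioi s).indicator w v := by
    intro s v
    by_cases h : s < v <;> simp [G, Set.indicator, h]
  have e2 : ∀ s v, G (s, v) = w v * (Set.Iio v).indicator b s := by
    intro s v
    by_cases h : s < v <;> simp [G, Set.indicator, h, mul_comm]
  have s1 : ∀ s ∈ Set.Ioo (0:ℝ) 1, Set.Ioo (0:ℝ) 1 ∩ Set.Ioi s = Set.Ioo s 1 := by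
    intro s hs
    ext x; simp only [Set.mem_inter_iff, Set.mem_Ioo, Set.mem_Ioi]
    constructor
    · rintro ⟨⟨_, h⟩, h'⟩; exact ⟨h', h⟩
    · rintro ⟨h', h⟩; exact ⟨⟨hs.1.trans h', h⟩, h'⟩
  have s2 : ∀ v ∈ Set.Ioo (0:ℝ) 1, Set.Ioo (0:ℝ) 1 ∩ Set.Iio v = Set.Ioo 0 v := by
    intro v hv
    ext x; simp only [Set.mem_inter_iff, Set.mem_Ioo, Set.mem_Iio]
    constructor
    · rintro ⟨⟨h, _⟩, h'⟩; exact ⟨h, h'⟩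
    · rintro ⟨h, h'⟩; exact ⟨⟨h, h'.trans hv.2⟩, h'⟩
  have i1 : ∀ s ∈ Set.Ioo (0:ℝ) 1, ∫ v, G (s, v) ∂μ = b s * W s := by
    intro s hs
    simp_rw [e1]
    rw [integral_const_mul, hμ, setIntegral_indicator measurableSet_Ioi, s1 s hs, (hw s hs).2]
  have i2 : ∀ v ∈ Set.Ioo (0:ℝ) 1, ∫ s, G (s, v) ∂μ = w v * ∫ s in Set.Ioo 0 v, b s := by
    intro v hv
    simp_rw [e2]
    rw [integral_const_mul, hμ, setIntegral_indicator measurableSet_Iio, s2 v hv]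
  have hG : Integrable G (μ.prod μ) := by
    rw [integrable_prod_iff mG.aestronglyMeasurable]
    constructor
    · filter_upwards [ae_restrict_mem measurableSet_Ioo] with s hs
      simp_rw [e1]
      refine Integrable.const_mul ?_ _
      rw [integrable_indicator_iff measurableSet_Ioi, IntegrableOn, hμ,
        Measure.restrict_restrict measurableSet_Ioi, Set.inter_comm, s1 s hs]
      exact (hw s hs).1
    · refine hint.congr ?_
      filter_upwards [ae_restrict_mem measurableSet_Ioo] with s hs
      rw [← i1 s hs]
      refine setIntegral_congr_fun measurableSet_Ioo fun v hv => ?_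
      rw [Real.norm_of_nonneg]
      simp only [G]
      split_ifs
      · exact mul_nonneg (pb s hs) (pw v hv)
      · exact le_rfl
  constructor
  · refine hG.integral_prod_right.congr ?_
    filter_upwards [ae_restrict_mem measurableSet_Ioo] with v hv
    exact i2 v hv
  · have := integral_integral_swap (f := fun s v => G (s, v)) hG
    rw [← setIntegral_congr_fun measurableSet_Ioo i2, ← setIntegral_congr_fun measurableSet_Ioo i1]
    exact this.symm


lemma Fv_int {d v : ℝ} (hd : 0 < d) (hd1 : d < 1) (hv : v ∈ Set.Ioo (0:ℝ) 1) :
    HasSum (fun k : ℕ => (poch 1 k * poch d k) / poch (2-d) k * v ^ k / (Nat.factorial k))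
      ((1-d) * ∫ t in Set.Ioo (0:ℝ) 1, t ^ ((1:ℝ)-1) * (1-t) ^ ((1-d)-1) * (1 - v*t) ^ (-d)) := by
  have h0 : 0 < 1-d := by linarith
  have h := (euler_int hd one_pos h0 hv.1.le hv.2.le
    (euler_integrable (-d) one_pos h0 hv.1.le hv.2)).mul_left (1-d)
  refine hasSum_of_eq h (fun k => ?_) rfl
  have := Real.Gamma_pos_of_pos h0
  have h2 := poch_pos' (a := 2-d) (by linarith) k
  have : 0 < (k.factorial : ℝ) := by exact_mod_cast k.factorial_pos
  rw [show (1:ℝ)+k+(1-d) = (2-d)+k by ring, add_comm (1:ℝ) k, Real.Gamma_nat_eq_factorial,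
      poch_Gamma (by linarith), show Real.Gamma (2-d) = (1-d)*Real.Gamma (1-d) by
        rw [← Real.Gamma_add_one h0.ne']; congr 1; ring, poch_one', pk]
  field_simp

lemma Fv_eq {d v : ℝ} (hd : 0 < d) (hd1 : d < 1) (hv : v ∈ Set.Ioo (0:ℝ) 1) :
    v ^ (1-d) * hyp2F1 1 d (2-d) v = (1-d) * (1-v) ^ (1-2*d) *
      ∫ s in Set.Ioo 0 v, s ^ (-d) * (1-s) ^ (2*d-2) := by
  rw [hyp2F1, (Fv_int hd hd1 hv).tsum_eq, cv hv.1.le hv.2]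
  have hv1 : 0 < 1 - v := by linarith [hv.2]
  have e1 : ∫ x in Set.Ioo (0:ℝ) 1, (1-v)/(1-v*x)^2 * (((1-x)/(1-v*x)) ^ ((1:ℝ)-1) *
      (1-(1-x)/(1-v*x)) ^ ((1-d)-1) * (1 - v*((1-x)/(1-v*x))) ^ (-d))
      = ∫ x in Set.Ioo (0:ℝ) 1, (1-v)^(1-2*d) * v^d * ((v*x) ^ (-d) * (1-v*x) ^ (2*d-2)) := by
    refine setIntegral_congr_fun measurableSet_Ioo fun x hx => ?_
    have h1 := (cv_maps hv.1.le hv.2 hx).1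
    have hx0 := hx.1
    have hv0 := hv.1
    rw [(cv_inv hv.1.le hv.2 hx).1, (cv_inv hv.1.le hv.2 hx).2,
      show (1-d)-1 = -d by ring, sub_self, Real.rpow_zero, Real.div_rpow (by positivity) h1.le,
      Real.div_rpow hv1.le h1.le, Real.mul_rpow hx0.le hv1.le, Real.mul_rpow hv0.le hx0.le,
      show 1 - 2*d = 1 + -d + -d by ring, Real.rpow_add hv1, Real.rpow_add hv1, Real.rpow_one,
      show 2*d-2 = d + d + (-2:ℝ) by ring, Real.rpow_add h1, Real.rpow_add h1,
      Real.rpow_neg h1.le, Real.rpow_neg h1.le, Real.rpow_neg hv0.le, Real.rpow_two]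
    have := Real.rpow_pos_of_pos h1 d
    have := Real.rpow_pos_of_pos hv0 d
    generalize (1-v*x)^d = A at *
    generalize v^d = B at *
    field_simp
  rw [e1, integral_const_mul]
  have e2 : ∫ x in Set.Ioo (0:ℝ) 1, ((v*x) ^ (-d) * (1-v*x) ^ (2*d-2))
      = v⁻¹ * ∫ s in Set.Ioo 0 v, s ^ (-d) * (1-s) ^ (2*d-2) := by
    rw [← integral_Ioc_eq_integral_Ioo, ← integral_Ioc_eq_integral_Ioo,
      ← intervalIntegral.integral_of_le zero_le_one, ← intervalIntegral.integral_of_le hv.1.le]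
    have := intervalIntegral.integral_comp_mul_left (a := 0) (b := 1)
      (fun s : ℝ => s ^ (-d) * (1-s) ^ (2*d-2)) hv.1.ne'
    simpa using this
  rw [e2]
  have : v ^ (1-d) * v^d * v⁻¹ = 1 := by
    rw [← Real.rpow_add hv.1, sub_add_cancel, Real.rpow_one, mul_inv_cancel₀ hv.1.ne']
  linear_combination ((1-d) * (1-v)^(1-2*d) * ∫ s in Set.Ioo 0 v, s ^ (-d) * (1-s) ^ (2*d-2)) * this

lemma w_int {d u s : ℝ} (hd1 : d < 4/5) (hu : u ∈ Set.Ioo (0:ℝ) 1) (hs : s ∈ Set.Ioo (0:ℝ) 1) :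
    IntegrableOn (fun v : ℝ => (1-v)^(3-5*d) * (1-u*v)^(5*d-5)) (Set.Ioo s 1) ∧
    ∫ v in Set.Ioo s 1, (1-v)^(3-5*d) * (1-u*v)^(5*d-5)
      = 1/((4-5*d)*(1-u)) * ((1-s)/(1-u*s))^(4-5*d) := by
  have hd : 0 < 4 - 5*d := by linarith
  have hu1 : 0 < 1 - u := by linarith [hu.2]
  let W : ℝ → ℝ := fun v => -(1/((4-5*d)*(1-u))) * ((1-v)/(1-u*v))^(4-5*d)
  have hpos : ∀ v ∈ Set.Icc s 1, 0 < 1 - u*v := by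
    intro v hv
    nlinarith [hu.1, hu.2, hv.1, hv.2, hs.1]
  have hcont : ContinuousOn W (Set.Icc s 1) := by
    refine ContinuousOn.mul continuousOn_const ?_
    refine ContinuousOn.rpow_const ?_ (fun _ _ => Or.inr hd.le)
    exact ContinuousOn.div (by fun_prop) (by fun_prop) fun v hv => (hpos v hv).ne'
  have hder : ∀ v ∈ Set.Ioo s 1, HasDerivAt W ((1-v)^(3-5*d) * (1-u*v)^(5*d-5)) v := by
    intro v hv
    have h1 := hpos v (Set.Ioo_subset_Icc_self hv)
    have hv1 : 0 < 1 - v := by linarith [hv.2]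
    have h := ((hasDerivAt_id v).const_sub 1).div (((hasDerivAt_id v).const_mul u).const_sub 1) h1.ne'
    have h2 := (h.rpow_const (p := 4-5*d) (Or.inl (div_pos hv1 h1).ne')).const_mul
      (-(1/((4-5*d)*(1-u))))
    refine h2.congr_deriv ?_
    simp only [id, Pi.div_apply]
    rw [show 4-5*d-1 = 3-5*d by ring, Real.div_rpow hv1.le h1.le,
      show 5*d-5 = -(3-5*d) + (-2:ℝ) by ring, Real.rpow_add h1, Real.rpow_neg h1.le,
      Real.rpow_neg h1.le, Real.rpow_two]
    have := Real.rpow_pos_of_pos h1 (3-5*d)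
    generalize (1-u*v)^(3-5*d) = A at *
    generalize (1-v)^(3-5*d) = B at *
    generalize h4 : 4 - 5*d = D at *
    have e : -1 * (1-u*v) - (1-v)*(-(u*1)) = -(1-u) := by ring
    rw [e]
    field_simp
  have hint := intervalIntegral.integrableOn_deriv_of_nonneg hcont hder (by
    intro v hv
    have h1 := hpos v (Set.Ioo_subset_Icc_self hv)
    have hv1 : 0 < 1 - v := by linarith [hv.2]
    positivity)
  refine ⟨hint.mono_set Set.Ioo_subset_Ioc_self, ?_⟩
  rw [← integral_Ioc_eq_integral_Ioo, ← intervalIntegral.integral_of_le hs.2.le,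
    intervalIntegral.integral_eq_sub_of_hasDerivAt_of_le hs.2.le hcont hder
      ((intervalIntegrable_iff_integrableOn_Ioc_of_le hs.2.le).2 hint)]
  simp [W, Real.zero_rpow hd.ne']

lemma H_hasSum {d u : ℝ} (hd : 0 < d) (hd1 : d < 1) (hu : u ∈ Set.Ioo (0:ℝ) 1) :
    HasSum (fun k : ℕ => (poch d k * poch (3-3*d) k) / poch (4-4*d) k * u ^ k / (Nat.factorial k))
      ((Real.Gamma (4-4*d) / (Real.Gamma (3-3*d) * Real.Gamma (1-d))) *
      ∫ t in Set.Ioo (0:ℝ) 1, t ^ ((3-3*d)-1) * (1-t) ^ ((1-d)-1) * (1 - u*t) ^ (-d)) := by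
  have h0 : 0 < 1-d := by linarith
  have h3 : 0 < 3-3*d := by linarith
  have h4 : 0 < 4-4*d := by linarith
  have h := (euler_int hd h3 h0 hu.1.le hu.2.le
    (euler_integrable (-d) h3 h0 hu.1.le hu.2)).mul_left 
    (Real.Gamma (4-4*d) / (Real.Gamma (3-3*d) * Real.Gamma (1-d)))
  refine hasSum_of_eq h (fun k => ?_) rfl
  have := Real.Gamma_pos_of_pos h0
  have := Real.Gamma_pos_of_pos h3
  have := Real.Gamma_pos_of_pos h4
  have := poch_pos' h4 k
  have := poch_pos' h3 k
  have : 0 < (k.factorial : ℝ) := by exact_mod_cast k.factorial_pos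
  rw [show (3-3*d)+k+(1-d) = (4-4*d)+k by ring, poch_Gamma h3, poch_Gamma h4, pk]
  generalize Real.Gamma (4-4*d) = X at *
  generalize Real.Gamma (3-3*d) = Y at *
  generalize Real.Gamma (1-d) = Z at *
  generalize poch (4-4*d) k = P at *
  field_simp

lemma stepA {d u : ℝ} (hd : 0 < d) (hd1 : d < 4/5) (hu : u ∈ Set.Ioo (0:ℝ) 1) :
    IntegrableOn (fun v : ℝ => (1-u)^(2-2*d) * (v^(1-d) * (1-v)^(2-3*d) * (1-u*v)^(5*d-5) *
      hyp2F1 1 d (2-d) v)) (Set.Ioo 0 1) ∧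
    ∫ v in Set.Ioo (0:ℝ) 1, (1-u)^(2-2*d) * (v^(1-d) * (1-v)^(2-3*d) * (1-u*v)^(5*d-5) *
      hyp2F1 1 d (2-d) v) = (1-d)/(4-5*d) * (Real.Gamma (3-3*d) * Real.Gamma (1-d) /
        Real.Gamma (4-4*d)) * hyp2F1 d (3-3*d) (4-4*d) u := by
  have h45 : 0 < 4 - 5*d := by linarith
  have h0 : 0 < 1-d := by linarith
  have h3 : 0 < 3-3*d := by linarith
  have h4 : 0 < 4-4*d := by linarith
  have hu1 : 0 < 1 - u := by linarith [hu.2]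
  have e0 : ∀ s ∈ Set.Ioo (0:ℝ) 1, 1/((4-5*d)*(1-u)) *
      (s^((1-d)-1) * (1-s)^((3-3*d)-1) * (1-u*s)^(5*d-4)) =
      (s^(-d) * (1-s)^(2*d-2)) * (1/((4-5*d)*(1-u)) * ((1-s)/(1-u*s))^(4-5*d)) := by
    intro s hs
    have h1 := (cv_maps hu.1.le hu.2 hs).1
    have hs1 : 0 < 1 - s := by linarith [hs.2]
    rw [Real.div_rpow hs1.le h1.le, show 5*d-4 = -(4-5*d) by ring, Real.rpow_neg h1.le,
      show (3-3*d)-1 = (2*d-2)+(4-5*d) by ring, Real.rpow_add hs1, show (1-d)-1 = -d by ring]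
    ring
  have hsw := swap_int (b := fun s : ℝ => s^(-d) * (1-s)^(2*d-2))
    (w := fun v : ℝ => (1-v)^(3-5*d) * (1-u*v)^(5*d-5))
    (W := fun s => 1/((4-5*d)*(1-u)) * ((1-s)/(1-u*s))^(4-5*d)) (by fun_prop) (by fun_prop)
    (by intro s hs; have := hs.1; have : 0 < 1 - s := by linarith [hs.2]
        positivity)
    (by intro s hs; have := (cv_maps hu.1.le hu.2 hs).1; have : 0 < 1 - s := by linarith [hs.2]
        positivity)
    (fun s hs => w_int hd1 hu hs)
    (IntegrableOn.congr_fun ((euler_integrable (5*d-4) h0 h3 hu.1.le hu.2).const_mul _) e0 measurableSet_Ioo)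
  have eK : ∀ v ∈ Set.Ioo (0:ℝ) 1, ((1-u)^(2-2*d) * (1-d)) * (((1-v)^(3-5*d) * (1-u*v)^(5*d-5)) *
      ∫ s in Set.Ioo 0 v, s^(-d) * (1-s)^(2*d-2)) =
      (1-u)^(2-2*d) * (v^(1-d) * (1-v)^(2-3*d) * (1-u*v)^(5*d-5) * hyp2F1 1 d (2-d) v) := by
    intro v hv
    have hv1 : 0 < 1 - v := by linarith [hv.2]
    have hF := Fv_eq hd (by linarith : d < 1) hv
    rw [show 3-5*d = (2-3*d)+(1-2*d) by ring, Real.rpow_add hv1]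
    linear_combination (-(1-u)^(2-2*d)*(1-v)^(2-3*d)*(1-u*v)^(5*d-5)) * hF
  refine ⟨IntegrableOn.congr_fun (hsw.1.const_mul _) eK measurableSet_Ioo, ?_⟩
  rw [← setIntegral_congr_fun measurableSet_Ioo eK, integral_const_mul, hsw.2,
    ← setIntegral_congr_fun measurableSet_Ioo e0, integral_const_mul, cv hu.1.le hu.2]
  have e1 : ∫ x in Set.Ioo (0:ℝ) 1, (1-u)/(1-u*x)^2 * (((1-x)/(1-u*x)) ^ ((1-d)-1) *
      (1-(1-x)/(1-u*x)) ^ ((3-3*d)-1) * (1 - u*((1-x)/(1-u*x))) ^ (5*d-4))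
      = ∫ x in Set.Ioo (0:ℝ) 1, (1-u)^(2*d-1) *
        (x ^ ((3-3*d)-1) * (1-x) ^ ((1-d)-1) * (1 - u*x) ^ (-d)) := by
    refine setIntegral_congr_fun measurableSet_Ioo fun x hx => ?_
    have h1 := (cv_maps hu.1.le hu.2 hx).1
    have hx0 := hx.1
    have hx1 : 0 < 1 - x := by linarith [hx.2]
    rw [(cv_inv hu.1.le hu.2 hx).1, (cv_inv hu.1.le hu.2 hx).2, Real.div_rpow hx1.le h1.le,
      Real.div_rpow (by positivity) h1.le,
      Real.div_rpow hu1.le h1.le, Real.mul_rpow hx0.le hu1.le,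
      show 2*d-1 = 1 + (3-3*d-1) + (5*d-4) by ring, Real.rpow_add hu1, Real.rpow_add hu1,
      Real.rpow_one,
      show -d = (-2:ℝ) + -(1-d-1) + -(3-3*d-1) + -(5*d-4) by ring, Real.rpow_add h1,
      Real.rpow_add h1, Real.rpow_add h1,
      Real.rpow_neg h1.le, Real.rpow_neg h1.le, Real.rpow_neg h1.le, Real.rpow_neg h1.le,
      Real.rpow_two]
    ring
  rw [e1, integral_const_mul, hyp2F1, (H_hasSum hd (by linarith) hu).tsum_eq]
  have e2 : (1-u)^(2-2*d) * (1-u)^(2*d-1) = 1 - u := by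
    rw [← Real.rpow_add hu1]; ring_nf; simp
  have := Real.Gamma_pos_of_pos h0
  have := Real.Gamma_pos_of_pos h3
  have := Real.Gamma_pos_of_pos h4
  generalize ∫ x in Set.Ioo (0:ℝ) 1, (x ^ ((3-3*d)-1) * (1-x) ^ ((1-d)-1) * (1 - u*x) ^ (-d)) = I
  have e3 : Real.Gamma (3-3*d) * Real.Gamma (1-d) / Real.Gamma (4-4*d) *
    (Real.Gamma (4-4*d) / (Real.Gamma (3-3*d) * Real.Gamma (1-d))) = 1 := by
    field_simp
  have e4 : 1/((4-5*d)*(1-u)) * (1-u) = 1/(4-5*d) := by field_simp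
  calc _ = (1-d) * (1/((4-5*d)*(1-u)) * ((1-u)^(2-2*d) * (1-u)^(2*d-1))) * I := by ring
    _ = (1-d)/(4-5*d) * 1 * I := by rw [e2, e4]; ring
    _ = _ := by linear_combination (-(1-d)/(4-5*d) * I) * e3


lemma aesm_of_hasSum {F : ℕ → ℝ → ℝ} {f : ℝ → ℝ} (hF : ∀ k, Measurable (F k))
    (h : ∀ x ∈ Set.Ioo (0:ℝ) 1, HasSum (fun k => F k x) (f x)) :
    AEStronglyMeasurable f ((volume : Measure ℝ).restrict (Set.Ioo 0 1)) := by
  refine aestronglyMeasurable_of_tendsto_ae Filter.atTop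
    (f := fun n x => ∑ k ∈ Finset.range n, F k x) (fun n => ?_) ?_
  · exact (Finset.measurable_sum _ fun k _ => hF k).aestronglyMeasurable
  · filter_upwards [ae_restrict_mem measurableSet_Ioo] with x hx
    exact (h x hx).tendsto_sum_nat

lemma pow_int (n : ℕ) : IntegrableOn (fun u : ℝ => u ^ n) (Set.Ioo 0 1) ∧
    ∫ u in Set.Ioo (0:ℝ) 1, u ^ n = 1 / (n + 1) := by
  constructor
  · exact (continuous_pow n).continuousOn.integrableOn_Icc.mono_set Set.Ioo_subset_Icc_self
  · rw [← integral_Ioc_eq_integral_Ioo, ← intervalIntegral.integral_of_le zero_le_one]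
    simp

lemma Fu_hasSum {d u : ℝ} (hd : 0 < d) (hd1 : d < 1) (hu : u ∈ Set.Ioo (0:ℝ) 1) :
    HasSum (fun k : ℕ => pk d k * gk d k * u ^ k) (hyp2F1 d (2*d-1) (2*d) u) := by
  have hs : Summable (fun k : ℕ => pk d k * gk d k * u ^ k) := by
    refine Summable.of_norm_bounded (pg_summable hd hd1) fun k => ?_
    rw [norm_mul, Real.norm_eq_abs, Real.norm_eq_abs, abs_of_nonneg (pow_nonneg hu.1.le k)]
    exact mul_le_of_le_one_right (abs_nonneg _) (pow_le_one₀ hu.1.le hu.2.le)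
  rw [hyp2F1]
  refine hasSum_of_eq hs.hasSum (fun _ => rfl) (tsum_congr fun k => ?_)
  rw [pk, gk]; ring

lemma Fu_bound {d u : ℝ} (hd : 0 < d) (hd1 : d < 1) (hu : u ∈ Set.Ioo (0:ℝ) 1) :
    ‖hyp2F1 d (2*d-1) (2*d) u‖ ≤ ∑' k, |pk d k * gk d k| := by
  rw [← (Fu_hasSum hd hd1 hu).tsum_eq]
  refine tsum_of_norm_bounded (pg_summable hd hd1).hasSum fun k => ?_
  rw [norm_mul, Real.norm_eq_abs, Real.norm_eq_abs, abs_of_nonneg (pow_nonneg hu.1.le k)]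
  exact mul_le_of_le_one_right (abs_nonneg _) (pow_le_one₀ hu.1.le hu.2.le)

lemma Fu_meas {d : ℝ} (hd : 0 < d) (hd1 : d < 1) :
    AEStronglyMeasurable (hyp2F1 d (2*d-1) (2*d)) ((volume : Measure ℝ).restrict (Set.Ioo 0 1)) :=
  aesm_of_hasSum (F := fun k u => pk d k * gk d k * u ^ k) (fun k => by fun_prop)
    fun _ hu => Fu_hasSum hd hd1 hu

lemma Fv_meas {d : ℝ} (hd : 0 < d) (hd1 : d < 1) :
    AEStronglyMeasurable (hyp2F1 1 d (2-d)) ((volume : Measure ℝ).restrict (Set.Ioo 0 1)) :=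
  aesm_of_hasSum
    (F := fun k v => (poch 1 k * poch d k) / poch (2-d) k * v ^ k / (Nat.factorial k))
    (fun k => by fun_prop) fun _ hv => (Fv_int hd hd1 hv).summable.hasSum

lemma Fu_mom {d : ℝ} (hd : 0 < d) (hd1 : d < 1) (k : ℕ) :
    IntegrableOn (fun u => u ^ k * hyp2F1 d (2*d-1) (2*d) u) (Set.Ioo 0 1) ∧
    ∫ u in Set.Ioo (0:ℝ) 1, u ^ k * hyp2F1 d (2*d-1) (2*d) u =
      ((Real.Gamma (2*d) * Real.Gamma (1-d) / Real.Gamma d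
        + (1-2*d) * ((k.factorial : ℝ) / ((1-d) * poch (2-d) k))) / (2-2*d+k)) := by
  constructor
  · refine (pow_int k).1.mul_bdd (c := ∑' k, |pk d k * gk d k|) (Fu_meas hd hd1) ?_
    filter_upwards [ae_restrict_mem measurableSet_Ioo] with u hu
    exact Fu_bound hd hd1 hu
  · have h := hasSum_integral_of_summable_integral_norm
      (μ := (volume : Measure ℝ).restrict (Set.Ioo 0 1))
      (F := fun (j : ℕ) (u : ℝ) => pk d j * gk d j * u ^ (k + j))
      (fun j => (pow_int (k+j)).1.const_mul _) (by
        refine Summable.of_nonneg_of_le (fun j => integral_nonneg fun _ => norm_nonneg _)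
          (fun j => ?_) (pg_summable hd hd1)
        have : ∫ u in Set.Ioo (0:ℝ) 1, ‖pk d j * gk d j * u ^ (k + j)‖
            = ∫ u in Set.Ioo (0:ℝ) 1, |pk d j * gk d j| * u ^ (k + j) := by
          refine setIntegral_congr_fun measurableSet_Ioo fun u hu => ?_
          rw [norm_mul, Real.norm_eq_abs, Real.norm_eq_abs, abs_of_nonneg (pow_nonneg hu.1.le _)]
        rw [this, integral_const_mul, (pow_int (k+j)).2]
        refine mul_le_of_le_one_right (abs_nonneg _) ?_
        rw [div_le_one (by positivity)]
        have : (0:ℝ) ≤ ((k+j : ℕ) : ℝ) := by positivity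
        linarith)
    have e : ∫ u in Set.Ioo (0:ℝ) 1, ∑' j : ℕ, pk d j * gk d j * u ^ (k + j)
        = ∫ u in Set.Ioo (0:ℝ) 1, u ^ k * hyp2F1 d (2*d-1) (2*d) u := by
      refine setIntegral_congr_fun measurableSet_Ioo fun u hu => ?_
      refine HasSum.tsum_eq (hasSum_of_eq ((Fu_hasSum hd hd1 hu).mul_left (u^k)) (fun j => ?_) rfl)
      rw [pow_add]; ring
    rw [e] at h
    refine h.unique (hasSum_of_eq (mom_hasSum hd hd1 k) (fun j => ?_) rfl)
    rw [integral_const_mul, (pow_int (k+j)).2]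
    push_cast
    ring

noncomputable def hk (d : ℝ) (k : ℕ) : ℝ :=
  (poch d k * poch (3-3*d) k) / poch (4-4*d) k / (Nat.factorial k)

lemma hk_nonneg {d : ℝ} (hd : 0 < d) (hd1 : d < 1) (k : ℕ) : 0 ≤ hk d k := by
  have := poch_pos' hd k
  have := poch_pos' (a := 3-3*d) (by linarith) k
  have := poch_pos' (a := 4-4*d) (by linarith) k
  unfold hk
  positivity

lemma hk_le {d : ℝ} (hd : 0 < d) (hd1 : d < 1) (k : ℕ) : hk d k ≤ pk d k := by
  have h1 := poch_pos' hd k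
  have h2 := poch_pos' (a := 4-4*d) (by linarith) k
  have h3 := poch_le' (a := 3-3*d) (b := 4-4*d) (by linarith) (by linarith) k
  unfold hk pk
  gcongr
  rw [div_le_iff₀ h2]
  gcongr

lemma H_hasSum' {d u : ℝ} (hd : 0 < d) (hd1 : d < 1) (hu : u ∈ Set.Ioo (0:ℝ) 1) :
    HasSum (fun k : ℕ => hk d k * u ^ k) (hyp2F1 d (3-3*d) (4-4*d) u) := by
  refine hasSum_of_eq (H_hasSum hd hd1 hu).summable.hasSum (fun k => ?_) rfl
  rw [hk]; ring

lemma H_nonneg {d u : ℝ} (hd : 0 < d) (hd1 : d < 1) (hu : u ∈ Set.Ioo (0:ℝ) 1) :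
    0 ≤ hyp2F1 d (3-3*d) (4-4*d) u :=
  (H_hasSum' hd hd1 hu).nonneg fun k => mul_nonneg (hk_nonneg hd hd1 k) (pow_nonneg hu.1.le k)

lemma H_int {d : ℝ} (hd : 0 < d) (hd1 : d < 1) :
    IntegrableOn (hyp2F1 d (3-3*d) (4-4*d)) (Set.Ioo 0 1) := by
  have hb := (beta_int one_pos (b := 1-d) (by linarith)).1
  refine Integrable.mono' hb (aesm_of_hasSum (F := fun k u => hk d k * u ^ k)
    (fun k => by fun_prop) fun _ hu => H_hasSum' hd hd1 hu) ?_
  filter_upwards [ae_restrict_mem measurableSet_Ioo] with u hu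
  rw [Real.norm_of_nonneg (H_nonneg hd hd1 hu)]
  have h := binom_hasSum d (x := u) (by rw [abs_of_pos hu.1]; exact hu.2)
  have := hasSum_le (fun k => mul_le_mul_of_nonneg_right (hk_le hd hd1 k) (pow_nonneg hu.1.le k))
    (H_hasSum' hd hd1 hu) h
  simpa [show 1 - d - 1 = -d by ring] using this

lemma hF_hasSum {d : ℝ} (hd : 0 < d) (hd1 : d < 1) :
    HasSum (fun k : ℕ => hk d k * ((Real.Gamma (2*d) * Real.Gamma (1-d) / Real.Gamma d
        + (1-2*d) * ((k.factorial : ℝ) / ((1-d) * poch (2-d) k))) / (2-2*d+k)))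
      (∫ u in Set.Ioo (0:ℝ) 1, hyp2F1 d (3-3*d) (4-4*d) u * hyp2F1 d (2*d-1) (2*d) u) := by
  set M := ∑' k, |pk d k * gk d k|
  have h := hasSum_integral_of_summable_integral_norm
      (μ := (volume : Measure ℝ).restrict (Set.Ioo 0 1))
      (F := fun (k : ℕ) (u : ℝ) => hk d k * (u ^ k * hyp2F1 d (2*d-1) (2*d) u))
      (fun k => (Fu_mom hd hd1 k).1.const_mul _) (by
        refine Summable.of_nonneg_of_le (fun j => integral_nonneg fun _ => norm_nonneg _)
          (fun k => ?_) ((S_hasSum hd hd1 one_pos).summable.mul_left M)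
        have : ∫ u in Set.Ioo (0:ℝ) 1, ‖hk d k * (u ^ k * hyp2F1 d (2*d-1) (2*d) u)‖
            ≤ ∫ u in Set.Ioo (0:ℝ) 1, (pk d k * M) * u ^ k := by
          refine setIntegral_mono_on ((Fu_mom hd hd1 k).1.const_mul _).norm
            ((pow_int k).1.const_mul _) measurableSet_Ioo fun u hu => ?_
          rw [norm_mul, norm_mul, Real.norm_of_nonneg (hk_nonneg hd hd1 k),
            Real.norm_of_nonneg (pow_nonneg hu.1.le _)]
          have h1 := Fu_bound hd hd1 hu
          have h2 := hk_le hd hd1 k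
          have h3 := pow_nonneg hu.1.le k
          have h4 := pk_pos hd k
          calc _ ≤ pk d k * (u ^ k * M) := by gcongr
            _ = _ := by ring
        refine this.trans (le_of_eq ?_)
        rw [integral_const_mul, (pow_int k).2, add_comm (k:ℝ) 1]
        ring)
  have e : ∫ u in Set.Ioo (0:ℝ) 1, ∑' k : ℕ, hk d k * (u ^ k * hyp2F1 d (2*d-1) (2*d) u)
        = ∫ u in Set.Ioo (0:ℝ) 1, hyp2F1 d (3-3*d) (4-4*d) u * hyp2F1 d (2*d-1) (2*d) u := by
    refine setIntegral_congr_fun measurableSet_Ioo fun u hu => ?_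
    refine HasSum.tsum_eq (hasSum_of_eq ((H_hasSum' hd hd1 hu).mul_right _) (fun j => ?_) rfl)
    ring
  rw [e] at h
  refine hasSum_of_eq h (fun k => ?_) rfl
  rw [integral_const_mul, (Fu_mom hd hd1 k).2]

lemma hF_eq {d : ℝ} (hd : 0 < d) (hd1 : d < 1) :
    ∫ u in Set.Ioo (0:ℝ) 1, hyp2F1 d (3-3*d) (4-4*d) u * hyp2F1 d (2*d-1) (2*d) u
    = Real.Gamma (2*d) * Real.Gamma (1-d) / Real.Gamma d / (2-2*d) *
        hyp3F2 d (2 - 2 * d) (3 - 3 * d) (3 - 2 * d) (4 - 4 * d) 1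
      + (1-2*d)/(1-d)/(2-2*d) *
        hyp4F3 1 d (2 - 2 * d) (3 - 3 * d) (2 - d) (3 - 2 * d) (4 - 4 * d) 1 := by
  have h22 : 0 < 2-2*d := by linarith
  have h1d : 0 < 1-d := by linarith
  have hsh : ∀ k : ℕ, poch (2-2*d) k / poch (3-2*d) k = (2-2*d) / (2-2*d+k) := by
    intro k
    have h := poch_shift (2-2*d) k
    rw [show 2-2*d+1 = 3-2*d by ring] at h
    have := poch_pos' (a := 3-2*d) (by linarith) k
    rw [div_eq_div_iff this.ne' (by positivity), h]
  have s1 : Summable (fun k : ℕ => hk d k / (2-2*d+k)) := by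
    refine Summable.of_nonneg_of_le (fun k => ?_) (fun k => ?_) (S_hasSum hd hd1 h22).summable
    · have := hk_nonneg hd hd1 k; positivity
    · have := hk_le hd hd1 k; gcongr
  have s2 : Summable (fun k : ℕ => hk d k / (2-2*d+k) * ((k.factorial : ℝ) / poch (2-d) k)) := by
    refine Summable.of_nonneg_of_le (fun k => ?_) (fun k => ?_) s1
    · have := hk_nonneg hd hd1 k
      have := poch_pos' (a := 2-d) (by linarith) k
      positivity
    · have := hk_nonneg hd hd1 k
      refine mul_le_of_le_one_right (by positivity) ?_
      rw [div_le_one (poch_pos' (a := 2-d) (by linarith) k), ← poch_one']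
      exact poch_le' one_pos (by linarith) k
  have t1 := s1.hasSum.mul_left (2-2*d)
  have t2 := s2.hasSum.mul_left (2-2*d)
  have v1 : hyp3F2 d (2 - 2 * d) (3 - 3 * d) (3 - 2 * d) (4 - 4 * d) 1
      = (2-2*d) * ∑' k : ℕ, hk d k / (2-2*d+k) := by
    rw [hyp3F2, ← t1.tsum_eq]
    refine tsum_congr fun k => ?_
    calc _ = hk d k * (poch (2-2*d) k / poch (3-2*d) k) := by rw [hk, one_pow]; ring
      _ = _ := by rw [hsh]; ring
  have v2 : hyp4F3 1 d (2 - 2 * d) (3 - 3 * d) (2 - d) (3 - 2 * d) (4 - 4 * d) 1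
      = (2-2*d) * ∑' k : ℕ, hk d k / (2-2*d+k) * ((k.factorial : ℝ) / poch (2-d) k) := by
    rw [hyp4F3, ← t2.tsum_eq]
    refine tsum_congr fun k => ?_
    calc _ = hk d k * (poch (2-2*d) k / poch (3-2*d) k) * ((k.factorial : ℝ) / poch (2-d) k) := by
          rw [hk, one_pow, poch_one']; ring
      _ = _ := by rw [hsh]; ring
  rw [v1, v2]
  refine (hF_hasSum hd hd1).unique (hasSum_of_eq
    ((s1.hasSum.mul_left (Real.Gamma (2*d) * Real.Gamma (1-d) / Real.Gamma d)).add
      (s2.hasSum.mul_left ((1-2*d)/(1-d)))) (fun k => ?_) ?_)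
  · have := poch_pos' (a := 2-d) (by linarith) k
    rw [show (k.factorial : ℝ) / ((1-d) * poch (2-d) k) = (k.factorial : ℝ) / poch (2-d) k / (1-d) by
      rw [div_div, mul_comm (1-d)]]
    ring
  · rw [← mul_assoc, ← mul_assoc, div_mul_cancel₀ _ h22.ne', div_mul_cancel₀ _ h22.ne']

theorem double_integral_B (d : ℝ) (hd0 : 0 < d) (hd1 : d < 4 / 5) :
    (∫ v in (0:ℝ)..1, ∫ u in (0:ℝ)..1,
      (1 - u) ^ (2 - 2 * d) * v ^ (1 - d) * (1 - v) ^ (2 - 3 * d) *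
        (1 - u * v) ^ (5 * d - 5) * hyp2F1 d (2 * d - 1) (2 * d) u * hyp2F1 1 d (2 - d) v)
    = Real.Gamma (1 - d) ^ 2 * Real.Gamma (2 * d) * Real.Gamma (3 - 3 * d) *
        Real.Gamma (4 - 5 * d) /
        (2 * Real.Gamma d * Real.Gamma (5 - 5 * d) * Real.Gamma (4 - 4 * d)) *
        hyp3F2 d (2 - 2 * d) (3 - 3 * d) (3 - 2 * d) (4 - 4 * d) 1
      + Real.Gamma (1 - d) * (1 - 2 * d) / (2 - 2 * d) *
          (Real.Gamma (3 - 3 * d) * Real.Gamma (4 - 5 * d) /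
            (Real.Gamma (5 - 5 * d) * Real.Gamma (4 - 4 * d))) *
          hyp4F3 1 d (2 - 2 * d) (3 - 3 * d) (2 - d) (3 - 2 * d) (4 - 4 * d) 1 := by
  have hd2 : d < 1 := by linarith
  simp_rw [intervalIntegral.integral_of_le zero_le_one, integral_Ioc_eq_integral_Ioo]
  set μ := (volume : Measure ℝ).restrict (Set.Ioo 0 1) with hμ
  set K : ℝ → ℝ → ℝ := fun v u => (1 - u) ^ (2 - 2 * d) * v ^ (1 - d) * (1 - v) ^ (2 - 3 * d) *
        (1 - u * v) ^ (5 * d - 5) * hyp2F1 d (2 * d - 1) (2 * d) u * hyp2F1 1 d (2 - d) v with hK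
  set c := (1-d)/(4-5*d) * (Real.Gamma (3-3*d) * Real.Gamma (1-d) / Real.Gamma (4-4*d)) with hc
  have eK : ∀ v u, K v u = hyp2F1 d (2 * d - 1) (2 * d) u * ((1-u)^(2-2*d) *
      (v^(1-d) * (1-v)^(2-3*d) * (1-u*v)^(5*d-5) * hyp2F1 1 d (2-d) v)) := by
    intro v u; simp only [hK]; ring
  have mK : AEStronglyMeasurable (fun p : ℝ × ℝ => K p.1 p.2) (μ.prod μ) := by
    have m1 : Measurable (fun p : ℝ × ℝ => (1 - p.2) ^ (2 - 2 * d) * p.1 ^ (1 - d) *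
      (1 - p.1) ^ (2 - 3 * d) * (1 - p.2 * p.1) ^ (5 * d - 5)) := by fun_prop
    exact (m1.aestronglyMeasurable.mul (Fu_meas hd0 hd2).comp_snd).mul (Fv_meas hd0 hd2).comp_fst
  have i1 : ∀ u ∈ Set.Ioo (0:ℝ) 1, ∫ v, K v u ∂μ =
      c * (hyp2F1 d (3-3*d) (4-4*d) u * hyp2F1 d (2*d-1) (2*d) u) := by
    intro u hu
    simp_rw [eK]
    rw [integral_const_mul, hμ, (stepA hd0 hd1 hu).2, hc]
    ring
  have i2 : ∀ u ∈ Set.Ioo (0:ℝ) 1, ∫ v, ‖K v u‖ ∂μ =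
      c * (hyp2F1 d (3-3*d) (4-4*d) u * ‖hyp2F1 d (2*d-1) (2*d) u‖) := by
    intro u hu
    have : ∫ v, ‖K v u‖ ∂μ = ∫ v, ‖hyp2F1 d (2 * d - 1) (2 * d) u‖ * ((1-u)^(2-2*d) *
      (v^(1-d) * (1-v)^(2-3*d) * (1-u*v)^(5*d-5) * hyp2F1 1 d (2-d) v)) ∂μ := by
      refine setIntegral_congr_fun measurableSet_Ioo fun v hv => ?_
      rw [eK, norm_mul]
      congr 1
      refine Real.norm_of_nonneg ?_
      have h1 := (cv_maps hu.1.le hu.2 hv).1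
      have h2 : 0 < 1 - v := by linarith [hv.2]
      have h3 : 0 < 1 - u := by linarith [hu.2]
      have h4 := hv.1
      have h5 : 0 ≤ hyp2F1 1 d (2-d) v := by
        refine tsum_nonneg fun k => ?_
        have := poch_pos' one_pos k
        have := poch_pos' hd0 k
        have := poch_pos' (a := 2-d) (by linarith) k
        positivity
      positivity
    rw [this, integral_const_mul, hμ, (stepA hd0 hd1 hu).2, hc]
    ring
  have hint : Integrable (fun p : ℝ × ℝ => K p.1 p.2) (μ.prod μ) := by
    rw [integrable_prod_iff' mK]
    constructor
    · filter_upwards [ae_restrict_mem measurableSet_Ioo] with u hu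
      simp_rw [eK]
      exact Integrable.const_mul (stepA hd0 hd1 hu).1 _
    · have : Integrable (fun u => c * (hyp2F1 d (3-3*d) (4-4*d) u *
          ‖hyp2F1 d (2*d-1) (2*d) u‖)) μ := by
        refine Integrable.const_mul ?_ _
        refine Integrable.mul_bdd (c := ∑' k, |pk d k * gk d k|) (H_int hd0 hd2)
          (Fu_meas hd0 hd2).norm ?_
        filter_upwards [ae_restrict_mem measurableSet_Ioo] with u hu
        rw [norm_norm]
        exact Fu_bound hd0 hd2 hu
      refine this.congr ?_
      filter_upwards [ae_restrict_mem measurableSet_Ioo] with u hu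
      exact (i2 u hu).symm
  have hswap := integral_integral_swap (f := K) hint
  have e : ∫ v, ∫ u, K v u ∂μ ∂μ = c * ∫ u in Set.Ioo (0:ℝ) 1,
      hyp2F1 d (3-3*d) (4-4*d) u * hyp2F1 d (2*d-1) (2*d) u := by
    rw [hswap, ← integral_const_mul]
    exact setIntegral_congr_fun measurableSet_Ioo i1
  rw [e, hF_eq hd0 hd2, hc]
  have h45 : 0 < 4 - 5*d := by linarith
  have h0 : 0 < 1-d := by linarith
  have g1 := Real.Gamma_pos_of_pos h0
  have g3 := Real.Gamma_pos_of_pos (s := 3-3*d) (by linarith)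
  have g4 := Real.Gamma_pos_of_pos (s := 4-4*d) (by linarith)
  have g45 := Real.Gamma_pos_of_pos h45
  have gd := Real.Gamma_pos_of_pos hd0
  rw [show 5-5*d = (4-5*d)+1 by ring, Real.Gamma_add_one h45.ne']
  generalize Real.Gamma (1-d) = G1 at *
  generalize Real.Gamma (3-3*d) = G3 at *
  generalize Real.Gamma (4-4*d) = G4 at *
  generalize Real.Gamma (4-5*d) = G45 at *
  generalize Real.Gamma (2*d) = G2 at *
  generalize Real.Gamma d = Gd at *
  generalize hyp3F2 d (2 - 2 * d) (3 - 3 * d) (3 - 2 * d) (4 - 4 * d) 1 = X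
  generalize hyp4F3 1 d (2 - 2 * d) (3 - 3 * d) (2 - d) (3 - 2 * d) (4 - 4 * d) 1 = Y
  rw [show 2-2*d = 2*(1-d) by ring]
  clear_value μ
  generalize 4-5*d = D at *
  generalize 1-2*d = E at *
  field_simp
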